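/- Let p be a prime integer, ℓ ≥ 1 and k ≥ 0 integers, and let Λ be a finite cyclic subgroup of (ℝ/ℤ)^{d+1} which is non-pyramidal and has δ-polynomial 1 + t^{k+1} + t^{2(k+1)} + ⋯ + t^{(p^ℓ−1)(k+1)}. Then there exist an integer t ≥ 1, integers 0 = ℓ₀ < ℓ₁ < ⋯ < ℓ_t = ℓ, and positive integers s₁, …, s_t satisfying s_i = (p^{ℓ−ℓ_{i−1}} − p^{ℓ−ℓ_{i+1}})(k+1) for 1 ≤ i ≤ t−1 and s_t = p^{ℓ−ℓ_{t−1}}(k+1), such that s₁ + ⋯ + s_t = d+1 and, after a permutation of the coordinates, Λ is the cyclic subgroup generated by the element whose coordinates in the i-th consecutive block of size s_i all equal 1/p^{ℓ_i} (for i = 1, …, t). -/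

import Mathlib

open scoped BigOperators

local instance : Fact ((0:ℝ) < 1) := ⟨one_pos⟩

noncomputable def fracR (x : AddCircle (1:ℝ)) : ℝ :=
  ((AddCircle.equivIco 1 0) x : ℝ)

noncomputable def ht {ι : Type*} [Fintype ι] (x : ι → AddCircle (1:ℝ)) : ℝ :=
  ∑ i, fracR (x i)

/-- `Λ` has δ-polynomial `1 + t^step + t^(2*step) + ⋯ + t^((v-1)*step)` :
the height map is a bijection from `Λ` onto `{j*step : 0 ≤ j ≤ v-1}`. -/
def HasDeltaPoly {ι : Type*} [Fintype ι] (v step : ℕ)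
    (Λ : Set (ι → AddCircle (1:ℝ))) : Prop :=
  Set.BijOn ht Λ {y : ℝ | ∃ j : ℕ, j < v ∧ y = (j : ℝ) * (step : ℝ)}

def NonPyramidal {ι : Type*} [Fintype ι] (Λ : Set (ι → AddCircle (1:ℝ))) : Prop :=
  ∀ i : ι, ∃ x ∈ Λ, x i ≠ 0

theorem fracR_coe (y : ℝ) : fracR (y : AddCircle (1:ℝ)) = Int.fract y := by
  simp [fracR, AddCircle.coe_equivIco_mk_apply]

theorem coe_fracR (x : AddCircle (1:ℝ)) : ((fracR x : ℝ) : AddCircle (1:ℝ)) = x :=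
  (AddCircle.equivIco 1 0).symm_apply_apply x

theorem fracR_nonneg (x : AddCircle (1:ℝ)) : 0 ≤ fracR x :=
  ((AddCircle.equivIco 1 0) x).2.1

theorem fracR_lt_one (x : AddCircle (1:ℝ)) : fracR x < 1 :=
  ((AddCircle.equivIco 1 0) x).2.2.trans_eq (zero_add 1)

theorem fracR_zero : fracR 0 = 0 := by
  simpa using fracR_coe 0

theorem fracR_add_le (x y : AddCircle (1:ℝ)) : fracR (x + y) ≤ fracR x + fracR y := by
  induction x using QuotientAddGroup.induction_on with | H a => ?_
  induction y using QuotientAddGroup.induction_on with | H b => ?_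
  have h := Int.fract_add_le a b
  rw [← fracR_coe, ← fracR_coe, ← fracR_coe, AddCircle.coe_add] at h
  exact h

theorem fracR_nsmul_add_le (j : ℕ) (x y : AddCircle (1:ℝ)) :
    fracR (j • x + y) ≤ j * fracR x + fracR y := by
  induction j with
  | zero => simp
  | succ j ih =>
    have h := fracR_add_le x (j • x + y)
    rw [succ_nsmul', add_assoc]
    push_cast
    linarith

theorem fracR_one_div {q : ℕ} (hq : 2 ≤ q) :
    fracR ((1 / (q : ℝ) : ℝ) : AddCircle (1:ℝ)) = 1 / q := by
  have h : (2 : ℝ) ≤ q := by exact_mod_cast hq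
  rw [fracR_coe, Int.fract_eq_self]
  exact ⟨by positivity, by rw [div_lt_one (by linarith)]; linarith⟩

theorem fracR_neg_one_div {q : ℕ} (hq : 1 ≤ q) :
    fracR (-((1 / (q : ℝ) : ℝ) : AddCircle (1:ℝ))) = 1 - 1 / q := by
  have h : (1 : ℝ) ≤ q := by exact_mod_cast hq
  have h' : 1 / (q : ℝ) ≤ 1 := by rw [div_le_one (by linarith)]; exact h
  have h0 : 0 < 1 / (q : ℝ) := by positivity
  have : (-((1 / (q : ℝ) : ℝ) : AddCircle (1:ℝ))) = ((1 - 1 / (q : ℝ) : ℝ) : AddCircle (1:ℝ)) := by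
    rw [AddCircle.coe_sub, AddCircle.coe_period, zero_sub]
  rw [this, fracR_coe, Int.fract_eq_self]
  constructor <;> linarith

theorem nsmul_one_div {q : ℕ} (hq : 1 ≤ q) :
    q • ((1 / (q : ℝ) : ℝ) : AddCircle (1:ℝ)) = 0 := by
  have h : (q : ℝ) ≠ 0 := by positivity
  rw [← AddCircle.coe_nsmul, nsmul_eq_mul, mul_one_div_cancel h, AddCircle.coe_period]

theorem one_div_eq_zero_iff {q : ℕ} (hq : 1 ≤ q) :
    ((1 / (q : ℝ) : ℝ) : AddCircle (1:ℝ)) = 0 ↔ q = 1 := by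
  constructor
  · intro h
    by_contra hne
    have h2 : 2 ≤ q := by omega
    have := fracR_one_div h2
    rw [h, fracR_zero] at this
    have h3 : 0 < 1 / (q : ℝ) := by positivity
    linarith
  · rintro rfl
    simp

theorem eq_zero_or_eq_one_div {r q : ℕ} (hr : 2 ≤ r) (hq : 1 ≤ q) {x : AddCircle (1:ℝ)}
    (hx : (r * q) • x = 0) (hlt : ((r : ℝ) - 1) * fracR x < 1 / q) :
    x = 0 ∨ x = ((1 / ((r * q : ℕ) : ℝ) : ℝ) : AddCircle (1:ℝ)) := by
  have hr' : (2 : ℝ) ≤ r := by exact_mod_cast hr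
  have hq' : (1 : ℝ) ≤ q := by exact_mod_cast hq
  have hN : (0 : ℝ) < (r * q : ℕ) := by push_cast; positivity
  rw [← coe_fracR x, ← AddCircle.coe_nsmul, AddCircle.coe_eq_zero_iff] at hx
  obtain ⟨c, hc⟩ := hx
  simp only [zsmul_eq_mul, mul_one, nsmul_eq_mul] at hc
  have hfr : fracR x = c / ((r * q : ℕ) : ℝ) := by field_simp; linarith
  have hc0 : 0 ≤ c := by
    have : (0 : ℝ) ≤ c := by rw [hc]; exact mul_nonneg hN.le (fracR_nonneg x)
    exact_mod_cast this
  have hc2 : c < 2 := by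
    by_contra! h
    have h' : (2 : ℝ) ≤ c := by exact_mod_cast h
    rw [lt_div_iff₀ (by linarith)] at hlt
    have : ((r : ℝ) - 1) * c < r := by
      rw [hc]; push_cast
      nlinarith
    nlinarith
  have : c = 0 ∨ c = 1 := by omega
  rcases this with rfl | rfl
  · left
    rw [← coe_fracR x, hfr]; simp
  · right
    conv_lhs => rw [← coe_fracR x, hfr]
    simp

theorem ht_nsmul_add_le {ι : Type*} [Fintype ι] (j : ℕ) (x y : ι → AddCircle (1:ℝ)) :
    ht (j • x + y) ≤ j * ht x + ht y := by
  unfold ht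
  rw [Finset.mul_sum, ← Finset.sum_add_distrib]
  exact Finset.sum_le_sum fun i _ => fracR_nsmul_add_le j (x i) (y i)

theorem fracR_eq_of_ht_eq {ι : Type*} [Fintype ι] {j : ℕ} {x y : ι → AddCircle (1:ℝ)}
    (h : ht (j • x + y) = j * ht x + ht y) (i : ι) :
    fracR (j • x i + y i) = j * fracR (x i) + fracR (y i) := by
  unfold ht at h
  rw [Finset.mul_sum, ← Finset.sum_add_distrib] at h
  exact (Finset.sum_eq_sum_iff_of_le
    fun i _ => fracR_nsmul_add_le j (x i) (y i)).1 h i (Finset.mem_univ i)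

theorem ht_zero {ι : Type*} [Fintype ι] : ht (0 : ι → AddCircle (1:ℝ)) = 0 := by
  simp [ht, fracR_zero]

theorem Set.InjOn.eq_self_of_le {N : ℕ} {φ : ℕ → ℕ} (hinj : Set.InjOn φ (Set.Iio N))
    (hle : ∀ x < N, φ x ≤ x) (x : ℕ) (hx : x < N) : φ x = x := by
  induction x using Nat.strong_induction_on with
  | _ x ih =>
    by_contra hne
    have hlt : φ x < x := lt_of_le_of_ne (hle x hx) hne
    exact hne (hinj (hlt.trans hx) hx (ih _ hlt (hlt.trans hx)))

theorem HasDeltaPoly.natCard_eq {ι : Type*} [Fintype ι] {v step : ℕ} (hs : 0 < step)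
    {Λ : AddSubgroup (ι → AddCircle (1:ℝ))}
    (h : HasDeltaPoly v step (Λ : Set (ι → AddCircle (1:ℝ)))) : Nat.card Λ = v := by
  have h1 : Nat.card Λ = Nat.card {y : ℝ | ∃ j : ℕ, j < v ∧ y = (j : ℝ) * (step : ℝ)} :=
    Nat.card_congr (Set.BijOn.equiv _ h)
  have h2 : {y : ℝ | ∃ j : ℕ, j < v ∧ y = (j : ℝ) * (step : ℝ)} =
      (fun j : ℕ => (j : ℝ) * (step : ℝ)) '' (Set.Iio v) := by
    ext y
    simp [eq_comm]
  rw [h1, h2, Nat.card_image_of_injective]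
  · simp
  · intro a b hab
    have : (step : ℝ) ≠ 0 := by positivity
    simpa [this] using hab

theorem mem_zmultiples_or_mem_zmultiples {G : Type*} [AddCommGroup G] {p ℓ : ℕ} (hp : p.Prime)
    {g u w : G} (hg : p ^ ℓ • g = 0) (hu : u ∈ AddSubgroup.zmultiples g)
    (hw : w ∈ AddSubgroup.zmultiples g) :
    u ∈ AddSubgroup.zmultiples w ∨ w ∈ AddSubgroup.zmultiples u := by
  obtain ⟨x, rfl⟩ := hu
  obtain ⟨y, rfl⟩ := hw
  have key : ∀ x y : ℤ, ∀ a b : ℕ, Int.gcd x (p ^ ℓ : ℕ) = p ^ a → Int.gcd y (p ^ ℓ : ℕ) = p ^ b →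
      b ≤ a → x • g ∈ AddSubgroup.zmultiples (y • g) := by
    intro x y a b ha hb hba
    have hbx : ((p ^ b : ℕ) : ℤ) ∣ x :=
      (Int.natCast_dvd_natCast.2 (pow_dvd_pow p hba)).trans (ha ▸ Int.gcd_dvd_left ..)
    obtain ⟨z, hz⟩ := hbx
    have hbez := Int.gcd_eq_gcd_ab y (p ^ ℓ : ℕ)
    rw [hb] at hbez
    have hg' : ((p ^ ℓ : ℕ) : ℤ) • g = 0 := by rw [natCast_zsmul]; exact hg
    refine ⟨y.gcdA (p ^ ℓ : ℕ) * z, ?_⟩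
    simp only
    have : x • g = (y.gcdA (p ^ ℓ : ℕ) * z * y) • g +
        (z * y.gcdB (p ^ ℓ : ℕ)) • (((p ^ ℓ : ℕ) : ℤ) • g) := by
      rw [← mul_smul, ← add_smul, hz, hbez]
      congr 1
      ring
    rw [this, hg', smul_zero, add_zero]
    simp only [mul_smul]
  have hgcd : ∀ x : ℤ, ∃ a, Int.gcd x (p ^ ℓ : ℕ) = p ^ a := by
    intro x
    have : Int.gcd x (p ^ ℓ : ℕ) ∣ p ^ ℓ := by
      have := Int.gcd_dvd_right x (p ^ ℓ : ℕ)
      exact_mod_cast this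
    obtain ⟨a, -, ha⟩ := (Nat.dvd_prime_pow hp).1 this
    exact ⟨a, ha⟩
  obtain ⟨a, ha⟩ := hgcd x
  obtain ⟨b, hb⟩ := hgcd y
  rcases le_total b a with h | h
  · exact Or.inl (key x y a b ha hb h)
  · exact Or.inr (key y x b a hb ha h)

/-- If adjoining `w` of height `M * step` to a subgroup `H` whose heights fill
`0, step, …, (M - 1) * step` gives `r * M` distinct elements `j • w + y` inside a subgroup on which
heights are injective multiples of `step`, then heights are additive on these sums. -/
theorem ht_nsmul_add_eq {ι : Type*} [Fintype ι] {v step M r : ℕ} (hs : 0 < step)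
    {Λ H : AddSubgroup (ι → AddCircle (1:ℝ))} {w : ι → AddCircle (1:ℝ)}
    (hΛ : HasDeltaPoly v step (Λ : Set (ι → AddCircle (1:ℝ))))
    (hH : HasDeltaPoly M step (H : Set (ι → AddCircle (1:ℝ))))
    (hHΛ : H ≤ Λ) (hw : w ∈ Λ) (hM : 0 < M) (hwt : ht w = (M : ℝ) * (step : ℝ))
    (hr : ∀ j : ℕ, j • w ∈ H → r ∣ j) {j : ℕ} (hj : j < r)
    {y : ι → AddCircle (1:ℝ)} (hy : y ∈ H) :
    ht (j • w + y) = j * ht w + ht y := by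
  have hs' : (0 : ℝ) < step := by exact_mod_cast hs
  have hsurj : ∀ a : ℕ, ∃ z : ι → AddCircle (1:ℝ), a < M → z ∈ H ∧ ht z = (a : ℝ) * step := by
    intro a
    by_cases ha : a < M
    · obtain ⟨z, hz, hz'⟩ := hH.surjOn ⟨a, ha, rfl⟩
      exact ⟨z, fun _ => ⟨hz, hz'⟩⟩
    · exact ⟨0, fun h => absurd h ha⟩
  choose Y hY using hsurj
  have hmod : ∀ x : ℕ, x % M < M := fun x => Nat.mod_lt x hM
  have hmem : ∀ x : ℕ, (x / M) • w + Y (x % M) ∈ Λ := fun x =>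
    Λ.add_mem (Λ.nsmul_mem hw _) (hHΛ (hY _ (hmod x)).1)
  have hφ : ∀ x : ℕ, ∃ a : ℕ, ht ((x / M) • w + Y (x % M)) = (a : ℝ) * step := by
    intro x
    obtain ⟨a, -, ha⟩ := hΛ.mapsTo (hmem x)
    exact ⟨a, ha⟩
  choose φ hφ using hφ
  have hle : ∀ x < r * M, φ x ≤ x := by
    intro x _
    have h := ht_nsmul_add_le (x / M) w (Y (x % M))
    rw [hφ, hwt, (hY _ (hmod x)).2] at h
    have h2 : ((x / M : ℕ) : ℝ) * M + (x % M : ℕ) = x := by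
      exact_mod_cast Nat.div_add_mod' x M
    have h3 : (φ x : ℝ) * step ≤ x * step := by rw [← h2]; linarith
    exact_mod_cast le_of_mul_le_mul_right h3 hs'
  have hinj_aux : ∀ a b : ℕ, b / M ≤ a / M → a < r * M → φ a = φ b → a = b := by
    intro a b hab ha h
    have heq : (a / M) • w + Y (a % M) = (b / M) • w + Y (b % M) :=
      hΛ.injOn (hmem a) (hmem b) (by rw [hφ, hφ, h])
    have hd : (a / M - b / M) • w = Y (b % M) - Y (a % M) := by
      rw [eq_sub_iff_add_eq, ← add_right_inj ((b / M) • w), ← add_assoc, ← add_smul,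
        Nat.add_sub_cancel' hab, heq]
    have hdvd := hr (a / M - b / M) (hd ▸ H.sub_mem (hY _ (hmod b)).1 (hY _ (hmod a)).1)
    have har : a / M < r := (Nat.div_lt_iff_lt_mul hM).2 ha
    have h0 := Nat.eq_zero_of_dvd_of_lt hdvd ((Nat.sub_le _ _).trans_lt har)
    have hdiv : a / M = b / M := le_antisymm (Nat.sub_eq_zero_iff_le.1 h0) hab
    rw [h0, zero_smul, eq_comm, sub_eq_zero] at hd
    have h4 := (hY _ (hmod b)).2
    rw [hd, (hY _ (hmod a)).2] at h4
    have h5 : a % M = b % M := by exact_mod_cast mul_right_cancel₀ hs'.ne' h4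
    rw [← Nat.div_add_mod a M, ← Nat.div_add_mod b M, hdiv, h5]
  have hinj : Set.InjOn φ (Set.Iio (r * M)) := by
    intro a ha b hb h
    rcases le_total (b / M) (a / M) with h' | h'
    · exact hinj_aux a b h' ha h
    · exact (hinj_aux b a h' hb h.symm).symm
  obtain ⟨a, ha, hya⟩ := hH.mapsTo hy
  have hx : a + M * j < r * M := by
    calc a + M * j < M * (j + 1) := by rw [mul_add]; omega
      _ ≤ M * r := Nat.mul_le_mul_left _ hj
      _ = r * M := mul_comm _ _
  have hself := hinj.eq_self_of_le hle _ hx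
  have h1 : (a + M * j) / M = j := by
    rw [Nat.add_mul_div_left _ _ hM, Nat.div_eq_of_lt ha, zero_add]
  have h2 : (a + M * j) % M = a := by rw [Nat.add_mul_mod_self_left, Nat.mod_eq_of_lt ha]
  have hYy : Y a = y := hH.injOn (hY a ha).1 hy (by rw [(hY a ha).2, hya])
  have := hφ (a + M * j)
  rw [hself, h1, h2, hYy] at this
  rw [this, hwt, hya]
  push_cast
  ring

/-- The shape of a generator: its coordinates are `1 / p ^ L b`, where `L` starts with
`0 = L 0 < L 1 < ⋯ < L t = n`, and the number of coordinates with a given exponent is as in the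
classification. Zero coordinates form the block `0`. -/
def BlockStructure {ι : Type*} [Fintype ι] (p step n : ℕ) (u : ι → AddCircle (1:ℝ)) : Prop :=
  ∃ (t : ℕ) (L : ℕ → ℕ) (c : ι → ℕ), L 0 = 0 ∧ StrictMono L ∧ L t = n ∧ (∀ i, c i ≤ t) ∧
    (∀ i, u i = ((1 / ((p ^ L (c i) : ℕ) : ℝ) : ℝ) : AddCircle (1:ℝ))) ∧
    (∀ b, b + 1 < t → Nat.card {i // c i = b + 1} + p ^ (n - L (b + 2)) * step =
      p ^ (n - L b) * step) ∧
    (∀ b, b + 1 = t → Nat.card {i // c i = b + 1} = p ^ (n - L b) * step) ∧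
    (1 ≤ t → ht u = ((p ^ (n - L 1) * step : ℕ) : ℝ))

theorem BlockStructure.extend {ι : Type*} [Fintype ι] {p step m n : ℕ} (hp : p.Prime)
    (hmn : m < n) {u w : ι → AddCircle (1:ℝ)} (hu : BlockStructure p step m u)
    (huw : u ∈ AddSubgroup.zmultiples w) (hwu : p ^ (n - m) • w ∈ AddSubgroup.zmultiples u)
    (hwt : ht w = ((p ^ m * step : ℕ) : ℝ))
    (hadd : ht ((p ^ (n - m) - 1) • w + (-u)) = ((p ^ (n - m) - 1 : ℕ) : ℝ) * ht w + ht (-u)) :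
    BlockStructure p step n w := by
  classical
  obtain ⟨t, L, c, hL0, hLm, hLt, hct, huc, hmid, hlast, hhtu⟩ := hu
  have hp0 : 0 < p := hp.pos
  have hr2 : 2 ≤ p ^ (n - m) :=
    hp.two_le.trans (Nat.le_self_pow (by omega) p)
  have hw : ∀ i, w i = 0 ∨
      w i = ((1 / ((p ^ (n - m) * p ^ L (c i) : ℕ) : ℝ) : ℝ) : AddCircle (1:ℝ)) := by
    intro i
    have hq : 1 ≤ p ^ L (c i) := Nat.one_le_pow _ _ hp0
    apply eq_zero_or_eq_one_div hr2 hq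
    · obtain ⟨z, hz⟩ := hwu
      have hz' : z • u i = p ^ (n - m) • w i := congrFun hz i
      rw [mul_comm, mul_smul, ← hz', smul_comm, huc, nsmul_one_div hq, smul_zero]
    · have h := fracR_eq_of_ht_eq hadd i
      have hlt := fracR_lt_one ((p ^ (n - m) - 1) • w i + (-u) i)
      rw [h, Pi.neg_apply, huc, fracR_neg_one_div hq, Nat.cast_sub (by omega), Nat.cast_one] at hlt
      linarith
  have hw0 : ∀ i, w i = 0 → c i = 0 := by
    intro i hi
    obtain ⟨z, hz⟩ := huw
    have hz' : z • w i = u i := congrFun hz i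
    rw [hi, smul_zero, huc, eq_comm, one_div_eq_zero_iff (Nat.one_le_pow _ _ hp0)] at hz'
    have h0 : L (c i) = 0 := by
      by_contra hne
      have := Nat.one_lt_pow hne hp.one_lt
      omega
    exact hLm.injective (h0.trans hL0.symm)
  let L' : ℕ → ℕ := fun q => Nat.casesOn q 0 (fun q => n - m + L q)
  have hL'0 : L' 0 = 0 := rfl
  have hL's : ∀ q, L' (q + 1) = n - m + L q := fun _ => rfl
  have hL'm : StrictMono L' := by
    apply strictMono_nat_of_lt_succ
    rintro (_ | q)
    · rw [hL's, hL'0]; omega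
    · have := hLm (Nat.lt_add_one q)
      rw [hL's, hL's]; omega
  let c' : ι → ℕ := fun i => if w i = 0 then 0 else c i + 1
  have hcard : ∀ b, Nat.card {i // c' i = b + 2} = Nat.card {i // c i = b + 1} := by
    intro b
    apply Nat.card_congr
    apply Equiv.subtypeEquivRight
    intro i
    simp only [c']
    split_ifs with h
    · simp [hw0 i h]
    · omega
  have hsum : ((p ^ (n - m) : ℕ) : ℝ) * ht w = Nat.card {i // c' i = 1} + ht u := by
    have hc1 : (Nat.card {i // c' i = 1} : ℝ) = ∑ i, if c' i = 1 then (1 : ℝ) else 0 := by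
      rw [Nat.card_eq_fintype_card, Fintype.card_subtype, Finset.sum_boole]
    rw [hc1, ht, ht, Finset.mul_sum, ← Finset.sum_add_distrib]
    refine Finset.sum_congr rfl fun i _ => ?_
    by_cases hi : w i = 0
    · have hc := hw0 i hi
      have hui : u i = 0 := by
        rw [huc, hc, hL0, one_div_eq_zero_iff (by simp)]; simp
      simp [c', hi, hui, fracR_zero]
    · have hwi := (hw i).resolve_left hi
      have hq : 1 ≤ p ^ L (c i) := Nat.one_le_pow _ _ hp0
      have hrq : 2 ≤ p ^ (n - m) * p ^ L (c i) := by nlinarith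
      have hrne : ((p ^ (n - m) : ℕ) : ℝ) ≠ 0 := by positivity
      have hqne : ((p ^ L (c i) : ℕ) : ℝ) ≠ 0 := by positivity
      have hfw : ((p ^ (n - m) : ℕ) : ℝ) * fracR (w i) = 1 / ((p ^ L (c i) : ℕ) : ℝ) := by
        rw [hwi, fracR_one_div hrq, Nat.cast_mul]
        field_simp
      rw [hfw]
      by_cases hc : c i = 0
      · have hui : u i = 0 := by
          rw [huc, hc, hL0, one_div_eq_zero_iff (by simp)]; simp
        simp [c', hi, hc, hui, fracR_zero, hL0]
      · have hpos : L (c i) ≠ 0 := by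
          have := hLm (Nat.pos_of_ne_zero hc)
          omega
        have hq2 : 2 ≤ p ^ L (c i) := hp.two_le.trans (Nat.le_self_pow hpos p)
        rw [huc, fracR_one_div hq2]
        simp [c', hi, hc]
  have hpn : p ^ (n - m) * (p ^ m * step) = p ^ n * step := by
    rw [← mul_assoc, ← pow_add, Nat.sub_add_cancel hmn.le]
  have hsum' : ((p ^ n * step : ℕ) : ℝ) = Nat.card {i // c' i = 1} + ht u := by
    rw [← hsum, hwt, ← hpn]; push_cast; ring
  refine ⟨t + 1, L', c', rfl, hL'm, ?_, ?_, ?_, ?_, ?_, ?_⟩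
  · rw [hL's]; omega
  · intro i
    have := hct i
    simp only [c']
    split_ifs <;> omega
  · intro i
    by_cases hi : w i = 0
    · rw [hi, eq_comm, one_div_eq_zero_iff (Nat.one_le_pow _ _ hp0)]
      simp [c', hi, L']
    · have hci : c' i = c i + 1 := by simp [c', hi]
      rw [hci, (hw i).resolve_left hi]
      rw [hL's, pow_add]
  · rintro (_ | b) hb
    · rw [hhtu (by omega)] at hsum'
      have h2 : L' (0 + 2) = n - m + L 1 := rfl
      have h : n - L' (0 + 2) = m - L 1 := by omega
      have h' : n - L' 0 = n := rfl
      rw [h, h']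
      exact_mod_cast hsum'.symm
    · have h1 : n - L' (b + 1 + 2) = m - L (b + 2) := by rw [hL's]; omega
      have h2 : n - L' (b + 1) = m - L b := by rw [hL's]; omega
      rw [hcard, h1, h2]
      exact hmid b (by omega)
  · rintro (_ | b) hb
    · have hu0 : u = 0 := by
        funext i
        have hci : c i = 0 := by have := hct i; omega
        rw [huc, hci, hL0, Pi.zero_apply, one_div_eq_zero_iff (by simp)]; simp
      rw [hu0, ht_zero, add_zero] at hsum'
      have h' : n - L' 0 = n := rfl
      rw [h']
      exact_mod_cast hsum'.symm
    · have h2 : n - L' (b + 1) = m - L b := by rw [hL's]; omega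
      rw [hcard, h2]
      exact hlast b (by omega)
  · intro _
    have h1 : L' 1 = n - m + L 0 := rfl
    have h : n - L' 1 = m := by omega
    rw [hwt, h]

/-- A proper subgroup with the right heights and a generator of the classified shape is contained
in a strictly larger one. -/
theorem exists_larger_blockStructure {ι : Type*} [Fintype ι] {p ℓ m step : ℕ} (hp : p.Prime)
    (hs : 0 < step) {Λ : AddSubgroup (ι → AddCircle (1:ℝ))} {g : ι → AddCircle (1:ℝ)}
    (hg : Λ = AddSubgroup.zmultiples g)
    (hΛ : HasDeltaPoly (p ^ ℓ) step (Λ : Set (ι → AddCircle (1:ℝ)))) (hm : m < ℓ)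
    {u : ι → AddCircle (1:ℝ)} (huΛ : u ∈ Λ)
    (hH : HasDeltaPoly (p ^ m) step
      (AddSubgroup.zmultiples u : Set (ι → AddCircle (1:ℝ))))
    (hu : BlockStructure p step m u) :
    ∃ n w, m < n ∧ n ≤ ℓ ∧ w ∈ Λ ∧
      HasDeltaPoly (p ^ n) step (AddSubgroup.zmultiples w : Set (ι → AddCircle (1:ℝ))) ∧
      BlockStructure p step n w := by
  have hs' : (0 : ℝ) < step := by exact_mod_cast hs
  have hHΛ : AddSubgroup.zmultiples u ≤ Λ := by simpa using huΛ
  obtain ⟨w, hwΛ, hwt⟩ := hΛ.surjOn ⟨p ^ m, Nat.pow_lt_pow_right hp.one_lt hm, rfl⟩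
  have hwu : w ∉ AddSubgroup.zmultiples u := by
    intro h
    obtain ⟨j, hj, hj'⟩ := hH.mapsTo h
    rw [hwt] at hj'
    have : p ^ m = j := by exact_mod_cast mul_right_cancel₀ hs'.ne' hj'
    omega
  have hgo : addOrderOf g = p ^ ℓ := by
    rw [← Nat.card_zmultiples, ← hg, hΛ.natCard_eq hs]
  have hg0 : p ^ ℓ • g = 0 := by rw [← hgo, addOrderOf_nsmul_eq_zero]
  have huo : addOrderOf u = p ^ m := by
    rw [← Nat.card_zmultiples, hH.natCard_eq hs]
  have huw : u ∈ AddSubgroup.zmultiples w :=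
    (mem_zmultiples_or_mem_zmultiples hp hg0 (hg ▸ huΛ) (hg ▸ hwΛ)).resolve_right hwu
  obtain ⟨n, hnℓ, hn⟩ : ∃ n ≤ ℓ, addOrderOf w = p ^ n := by
    rw [← Nat.dvd_prime_pow hp, addOrderOf_dvd_iff_nsmul_eq_zero]
    rw [hg] at hwΛ
    obtain ⟨z, rfl⟩ := hwΛ
    simp only [smul_comm (p ^ ℓ) z g, hg0, smul_zero]
  obtain ⟨z, hz⟩ := huw
  have hz' : z • w = u := hz
  have hmn' : m ≤ n := by
    rw [← Nat.pow_dvd_pow_iff_le_right hp.one_lt, ← huo, ← hn, addOrderOf_dvd_iff_nsmul_eq_zero,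
      ← hz', smul_comm, addOrderOf_nsmul_eq_zero, smul_zero]
  have hsplit : p ^ m * p ^ (n - m) = p ^ n := by rw [← pow_add, Nat.add_sub_cancel' hmn']
  have hpm : 0 < p ^ m := pow_pos hp.pos _
  have hpr : 0 < p ^ (n - m) := pow_pos hp.pos _
  have hrw : p ^ (n - m) • w ∈ AddSubgroup.zmultiples u := by
    have h1 : AddSubgroup.zmultiples u ≤ AddSubgroup.zmultiples (p ^ (n - m) • w) := by
      rw [AddSubgroup.zmultiples_le]
      have hdvd : (p ^ n : ℤ) ∣ p ^ m * z := by
        have : ((addOrderOf w : ℕ) : ℤ) ∣ p ^ m * z := by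
          rw [addOrderOf_dvd_iff_zsmul_eq_zero, mul_smul, hz']
          have := addOrderOf_nsmul_eq_zero u
          rw [huo, ← natCast_zsmul] at this
          exact_mod_cast this
        rw [hn] at this
        exact_mod_cast this
      have hdvd' : ((p ^ (n - m) : ℕ) : ℤ) ∣ z := by
        have h0 : (p ^ m : ℤ) ≠ 0 := by exact_mod_cast hpm.ne'
        rw [← mul_dvd_mul_iff_left h0]
        refine dvd_trans (dvd_of_eq ?_) hdvd
        exact_mod_cast hsplit
      obtain ⟨a, ha⟩ := hdvd'
      exact ⟨a, by simp only [← hz', ha, mul_comm _ a, mul_smul, natCast_zsmul]⟩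
    have hcard : Nat.card (AddSubgroup.zmultiples (p ^ (n - m) • w)) = p ^ m := by
      rw [Nat.card_zmultiples, addOrderOf_nsmul_of_dvd hpr.ne' (hn ▸ Dvd.intro_left _ hsplit), hn,
        ← hsplit, Nat.mul_div_cancel _ hpr]
    have hfin : Finite (AddSubgroup.zmultiples (p ^ (n - m) • w)) :=
      Nat.finite_of_card_ne_zero (hcard ▸ hpm.ne')
    have heq := AddSubgroup.eq_of_le_of_card_ge h1
      (by rw [hcard, Nat.card_zmultiples, huo])
    rw [heq]
    exact AddSubgroup.mem_zmultiples _
  have hmn : m < n := by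
    refine lt_of_le_of_ne hmn' ?_
    rintro rfl
    apply hwu
    simpa using hrw
  have hr : ∀ j : ℕ, j • w ∈ AddSubgroup.zmultiples u → p ^ (n - m) ∣ j := by
    intro j hj
    have h0 : p ^ m • (j • w) = 0 := by
      obtain ⟨a, ha⟩ := hj
      have ha' : a • u = j • w := ha
      rw [← ha', smul_comm, ← huo, addOrderOf_nsmul_eq_zero, smul_zero]
    rw [← mul_smul, ← addOrderOf_dvd_iff_nsmul_eq_zero, hn, ← hsplit] at h0
    exact Nat.dvd_of_mul_dvd_mul_left hpm h0
  have hadd : ∀ j < p ^ (n - m), ∀ y ∈ AddSubgroup.zmultiples u,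
      ht (j • w + y) = j * ht w + ht y :=
    fun j hj y hy => ht_nsmul_add_eq hs hΛ hH hHΛ hwΛ hpm hwt hr hj hy
  have hwt' : ht w = ((p ^ m * step : ℕ) : ℝ) := by rw [hwt]; push_cast; ring
  refine ⟨n, w, hmn, hnℓ, hwΛ, ⟨?_, ?_, ?_⟩, hu.extend hp hmn ⟨z, hz⟩ hrw hwt' ?_⟩
  · rintro x ⟨a, rfl⟩
    have hp0 : (0 : ℤ) < (p ^ (n - m) : ℕ) := by exact_mod_cast hpr
    obtain ⟨j, hj⟩ := Int.eq_ofNat_of_zero_le (Int.emod_nonneg a hp0.ne')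
    have hjlt : j < p ^ (n - m) := by
      have := Int.emod_lt_of_pos a hp0
      rw [hj] at this
      exact_mod_cast this
    have hy : (a / (p ^ (n - m) : ℕ)) • (p ^ (n - m) • w) ∈ AddSubgroup.zmultiples u :=
      AddSubgroup.zsmul_mem _ hrw _
    have ha : a • w = j • w + (a / (p ^ (n - m) : ℕ)) • (p ^ (n - m) • w) := by
      rw [← natCast_zsmul w j, ← hj, ← natCast_zsmul w, ← mul_smul, ← add_smul,
        Int.emod_add_ediv_mul]
    obtain ⟨b, hb, hb'⟩ := hH.mapsTo hy
    refine ⟨j * p ^ m + b, ?_, ?_⟩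
    · calc j * p ^ m + b < (j + 1) * p ^ m := by rw [add_mul]; omega
        _ ≤ p ^ (n - m) * p ^ m := Nat.mul_le_mul_right _ hjlt
        _ = p ^ n := by rw [mul_comm, hsplit]
    · simp only
      rw [ha, hadd j hjlt _ hy, hb', hwt]
      push_cast
      ring
  · exact hΛ.injOn.mono (by simpa using hwΛ)
  · rintro _ ⟨x, hx, rfl⟩
    have hj : x / p ^ m < p ^ (n - m) := by
      rw [Nat.div_lt_iff_lt_mul hpm, mul_comm, hsplit]; exact hx
    obtain ⟨y, hy, hy'⟩ := hH.surjOn ⟨x % p ^ m, Nat.mod_lt _ hpm, rfl⟩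
    refine ⟨(x / p ^ m) • w + y, ?_, ?_⟩
    · refine AddSubgroup.add_mem _ (AddSubgroup.nsmul_mem _ (AddSubgroup.mem_zmultiples w) _) ?_
      exact AddSubgroup.zmultiples_le.2 (show u ∈ AddSubgroup.zmultiples w from ⟨z, hz⟩) hy
    · rw [hadd _ hj y hy, hy', hwt, ← mul_assoc, ← add_mul]
      congr 1
      exact_mod_cast Nat.div_add_mod' x (p ^ m)
  · exact hadd _ (by omega) _ (neg_mem (AddSubgroup.mem_zmultiples u))

theorem blockStructure_zero {ι : Type*} [Fintype ι] (p step : ℕ) :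
    BlockStructure p step 0 (0 : ι → AddCircle (1:ℝ)) := by
  refine ⟨0, id, fun _ => 0, rfl, strictMono_id, rfl, fun _ => le_rfl, fun i => ?_,
    fun b hb => by omega, fun b hb => by omega, fun h => by omega⟩
  rw [Pi.zero_apply, eq_comm, one_div_eq_zero_iff (by simp)]
  simp

theorem exists_generator_blockStructure {ι : Type*} [Fintype ι] {p ℓ step : ℕ} (hp : p.Prime)
    (hs : 0 < step) {Λ : AddSubgroup (ι → AddCircle (1:ℝ))} {g : ι → AddCircle (1:ℝ)}
    (hg : Λ = AddSubgroup.zmultiples g)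
    (hΛ : HasDeltaPoly (p ^ ℓ) step (Λ : Set (ι → AddCircle (1:ℝ)))) :
    ∃ w, Λ = AddSubgroup.zmultiples w ∧ BlockStructure p step ℓ w := by
  have key : ∀ k : ℕ, ∀ m, ℓ - m = k → m ≤ ℓ → ∀ u ∈ Λ,
      HasDeltaPoly (p ^ m) step (AddSubgroup.zmultiples u : Set (ι → AddCircle (1:ℝ))) →
      BlockStructure p step m u →
      ∃ w, Λ = AddSubgroup.zmultiples w ∧ BlockStructure p step ℓ w := by
    intro k
    induction k using Nat.strong_induction_on with
    | _ k ih =>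
      intro m hk hm u hu hH hB
      rcases hm.eq_or_lt with rfl | hlt
      · refine ⟨u, le_antisymm (fun x hx => ?_) (by simpa using hu), hB⟩
        obtain ⟨y, hy, hyx⟩ := hH.surjOn (hΛ.mapsTo hx)
        have hle : AddSubgroup.zmultiples u ≤ Λ := by simpa using hu
        rwa [← hΛ.injOn (hle hy) hx hyx]
      · obtain ⟨n, w, hmn, hn, hw, hK, hBw⟩ :=
          exists_larger_blockStructure hp hs hg hΛ hlt hu hH hB
        exact ih (ℓ - n) (by omega) n rfl hn w hw hK hBw
  refine key ℓ 0 rfl (Nat.zero_le _) 0 Λ.zero_mem ?_ (blockStructure_zero p step)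
  have h : (AddSubgroup.zmultiples (0 : ι → AddCircle (1:ℝ)) : Set (ι → AddCircle (1:ℝ))) = {0} := by
    simp
  have h' : {y : ℝ | ∃ j : ℕ, j < p ^ 0 ∧ y = (j : ℝ) * (step : ℝ)} = {0} := by
    ext y; simp
  rw [HasDeltaPoly, h, h', Set.bijOn_singleton]
  exact ht_zero

theorem stmt_11 (p ℓ k d : ℕ) (hp : p.Prime) (hℓ : 1 ≤ ℓ)
    (Λ : AddSubgroup (Fin (d+1) → AddCircle (1:ℝ)))
    (hfin : (Λ : Set (Fin (d+1) → AddCircle (1:ℝ))).Finite)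
    (hcyc : ∃ g : Fin (d+1) → AddCircle (1:ℝ), Λ = AddSubgroup.zmultiples g)
    (hnp : NonPyramidal (Λ : Set (Fin (d+1) → AddCircle (1:ℝ))))
    (hΛ : HasDeltaPoly (p^ℓ) (k+1) (Λ : Set (Fin (d+1) → AddCircle (1:ℝ)))) :
    ∃ t : ℕ, ∃ ht1 : 1 ≤ t, ∃ L : Fin (t+1) → ℕ,
      L 0 = 0 ∧ StrictMono L ∧ L (Fin.last t) = ℓ ∧
      ∃ s : Fin t → ℕ, (∀ b, 0 < s b) ∧
        (∀ b : Fin t, ∀ h2 : (b : ℕ) + 2 ≤ t,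
          s b = (p^(ℓ - L b.castSucc) - p^(ℓ - L ⟨(b : ℕ) + 2, by omega⟩)) * (k+1)) ∧
        s ⟨t-1, by omega⟩ = p^(ℓ - L ⟨t-1, by omega⟩) * (k+1) ∧
        (∑ b, s b) = d + 1 ∧
        ∃ e : Fin (d+1) ≃ ((b : Fin t) × Fin (s b)),
          Λ = AddSubgroup.zmultiples
            (fun i : Fin (d+1) =>
              ((1 / ((p : ℝ)^(L (e i).1.succ)) : ℝ) : AddCircle (1:ℝ))) := by
  obtain ⟨g, hg⟩ := hcyc
  obtain ⟨w, hw, t, L, c, hL0, hLm, hLt, hct, hwc, hmid, hlast, -⟩ :=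
    exists_generator_blockStructure (step := k + 1) hp (Nat.succ_pos k) hg hΛ
  have ht1 : 1 ≤ t := by
    rcases Nat.eq_zero_or_pos t with rfl | h
    · omega
    · exact h
  have hc1 : ∀ i, 1 ≤ c i := by
    intro i
    by_contra! hc
    obtain ⟨x, hx, hxi⟩ := hnp i
    rw [hw] at hx
    obtain ⟨z, rfl⟩ := hx
    apply hxi
    have hwi : w i = 0 := by
      rw [hwc, Nat.lt_one_iff.1 hc, hL0, one_div_eq_zero_iff (by simp)]; simp
    simp [hwi]
  have hLle : ∀ b ≤ t, L b ≤ ℓ := fun b hb => hLt ▸ hLm.monotone hb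
  let f : Fin (d + 1) → Fin t := fun i => ⟨c i - 1, by have := hc1 i; have := hct i; omega⟩
  let s : Fin t → ℕ := fun b => Nat.card {i // f i = b}
  have hsc : ∀ b, s b = Nat.card {i // c i = (b : ℕ) + 1} := by
    intro b
    apply Nat.card_congr
    apply Equiv.subtypeEquivRight
    intro i
    have := hc1 i
    simp only [f, Fin.ext_iff]
    omega
  let e : Fin (d + 1) ≃ ((b : Fin t) × Fin (s b)) :=
    (Equiv.sigmaFiberEquiv f).symm.trans (Equiv.sigmaCongrRight fun b => Finite.equivFin _)
  have he : ∀ i, (e i).1 = f i := fun i => rfl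
  have hsmid : ∀ b : Fin t, (b : ℕ) + 2 ≤ t →
      s b = (p ^ (ℓ - L b) - p ^ (ℓ - L (b + 2))) * (k + 1) := by
    intro b hb
    have := hmid b (by omega)
    rw [hsc, Nat.sub_mul]
    exact Nat.eq_sub_of_add_eq this
  have hslast : ∀ b : Fin t, (b : ℕ) + 1 = t → s b = p ^ (ℓ - L b) * (k + 1) := by
    intro b hb
    rw [hsc, hlast b hb]
  refine ⟨t, ht1, fun b => L b, hL0, hLm.comp Fin.val_strictMono, hLt, s, ?_, hsmid,
    hslast _ (by simp only; omega), ?_, e, ?_⟩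
  · intro b
    by_cases hb : (b : ℕ) + 2 ≤ t
    · rw [hsmid b hb]
      have h1 : L b < L (b + 2) := hLm (by omega)
      have h2 := hLle (b + 2) hb
      have := Nat.pow_lt_pow_right hp.one_lt (show ℓ - L (b + 2) < ℓ - L b by omega)
      exact Nat.mul_pos (by omega) (Nat.succ_pos k)
    · rw [hslast b (by omega)]
      exact Nat.mul_pos (pow_pos hp.pos _) (Nat.succ_pos k)
  · have := Nat.card_congr e
    simpa [Nat.card_sigma] using this.symm
  · rw [hw]
    congr 1
    funext i
    have h1 := hc1 i
    have : ((e i).1.succ : ℕ) = c i := by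
      rw [he, Fin.val_succ]
      simp only [f]
      omega
    simp only [this, hwc, Nat.cast_pow]
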